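/- arXiv:1705.06213 — 2 statements merged into one kernel-verified Lean document; each statement's English description precedes it below -/
import Mathlib

section
/- Let G be a group acting without edge inversions on a simplicial tree T, and let g1, g2 ∈ G be elliptic elements with Fix(g1) ∩ Fix(g2) = ∅. Then the product g1·g2 is hyperbolic and its translation length is τ(g1·g2) = 2·d(Fix(g1), Fix(g2)), where d(A,B) denotes the minimal simplicial distance between a vertex of A and a vertex of B. -/
open SimpleGraph Pointwise

section TreeDefs

variable {G : Type*} [Group G]

/-- The action of `G` on the vertices preserves adjacency. -/
def ActsByAut (G : Type*) [Group G] {V : Type*} [MulAction G V] (T : SimpleGraph V) : Prop :=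
  ∀ (g : G) (v w : V), T.Adj v w → T.Adj (g • v) (g • w)

/-- The action has no edge inversions: no element swaps the endpoints of an edge. -/
def NoEdgeInversion (G : Type*) [Group G] {V : Type*} [MulAction G V] (T : SimpleGraph V) : Prop :=
  ∀ (g : G) (v w : V), T.Adj v w → ¬(g • v = w ∧ g • w = v)

/-- The set of vertices fixed by `g`. -/
def Fixed (V : Type*) [MulAction G V] (g : G) : Set V := {v | g • v = v}

/-- `g` is elliptic: it fixes some vertex. -/
def IsElliptic (V : Type*) [MulAction G V] (g : G) : Prop := ∃ v : V, g • v = v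

/-- `g` is hyperbolic: it fixes no vertex. -/
def IsHyperbolic (V : Type*) [MulAction G V] (g : G) : Prop := ¬ ∃ v : V, g • v = v

/-- Translation length of `g`: the infimum of `d(v, g • v)` over all vertices `v`. -/
noncomputable def transLen {V : Type*} [MulAction G V] (T : SimpleGraph V) (g : G) : ℕ :=
  ⨅ v : V, T.dist v (g • v)

/-- The axis of a (hyperbolic) element: the vertices moved exactly the translation length. -/
noncomputable def Axis {V : Type*} [MulAction G V] (T : SimpleGraph V) (g : G) : Set V :=
  {v | T.dist v (g • v) = transLen T g}

/-- Diameter (in `ℕ∞`) of a set of vertices: the sup of pairwise simplicial distances. -/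
noncomputable def setDiam {V : Type*} (T : SimpleGraph V) (S : Set V) : ℕ∞ :=
  ⨆ v ∈ S, ⨆ w ∈ S, (T.dist v w : ℕ∞)

/-- Minimal simplicial distance between two sets of vertices. -/
noncomputable def setDist {V : Type*} (T : SimpleGraph V) (A B : Set V) : ℕ :=
  sInf {n : ℕ | ∃ v ∈ A, ∃ w ∈ B, T.dist v w = n}

/-- The action of `G` on `T` is `k`-acylindrical: the fixed-point set of every nontrivial
elliptic element has diameter at most `k`. -/
def AcylindricalAction {V : Type*} (T : SimpleGraph V) (G : Type*) [Group G] [MulAction G V]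
    (k : ℕ) : Prop :=
  ∀ g : G, g ≠ 1 → IsElliptic V g → setDiam T (Fixed V g) ≤ (k : ℕ∞)

/-- `a` and `b` generate a rank 2 free product in `G`: the canonical homomorphism
`⟨a⟩ ∗ ⟨b⟩ → G` from the free product of the cyclic subgroups generated by `a` and `b`
is injective. -/
def IsRank2FreeProduct {G : Type*} [Group G] (a b : G) : Prop :=
  Function.Injective
    (Monoid.Coprod.lift (Subgroup.zpowers a).subtype (Subgroup.zpowers b).subtype)

/-- `a` and `b` freely generate a rank 2 free subgroup of `G`: the homomorphism from the
free group on two generators sending the generators to `a` and `b` is injective. -/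
def FreelyGeneratesFreeSubgroup {G : Type*} [Group G] (a b : G) : Prop :=
  Function.Injective ((FreeGroup.lift (fun i : Bool => if i then a else b)) : FreeGroup Bool →* G)

/-- `a` and `b` freely generate a rank 2 free subsemigroup of `G`: the monoid homomorphism
from the free monoid on two generators sending the generators to `a` and `b` is injective. -/
def FreelyGeneratesFreeSubsemigroup {G : Type*} [Monoid G] (a b : G) : Prop :=
  Function.Injective ((FreeMonoid.lift (fun i : Bool => if i then a else b)) : FreeMonoid Bool →* G)

/-- A line in a simplicial tree: the image of an isometric embedding of `ℤ`. -/
def IsLine {V : Type*} (T : SimpleGraph V) (L : Set V) : Prop :=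
  ∃ f : ℤ → V, (∀ m n : ℤ, T.dist (f m) (f n) = (m - n).natAbs) ∧ L = Set.range f

end TreeDefs

/-!
Let `p ∈ Fix(g₁)` and `q ∈ Fix(g₂)` realise the distance `D > 0` between the two fixed-point sets,
and put `h = g₁ * g₂`. Since `p` is the fixed vertex of `g₁` closest to `q`, the geodesics `[p, q]`
and `g₁ • [p, q]` meet only at `p`, so that `d(q, h • q) = d(q, g₁ • q) = 2 * D`; symmetrically
`[p, q]` and `g₂ • [p, q]` meet only at `q`. Hence the path through
`q, p, h • q, h • p, h ^ 2 • q, …` has no backtracking and, in a tree, is a geodesic. The resulting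
identity `d(q, h ^ n • q) = n * d(q, h • q)` makes `d(q, h • q)` the minimal displacement of `h`:
for every `v`, `n * d(q, h • q) ≤ n * d(v, h • v) + 2 * d(q, v)`.
-/

section Metric

variable {V : Type*} {T : SimpleGraph V}

theorem dist_eq_length_of_isPath (hT : T.IsTree) {u v : V} {p : T.Walk u v} (hp : p.IsPath) :
    T.dist u v = p.length := by
  obtain ⟨q, hq, hlength⟩ := hT.connected.exists_path_of_dist u v
  rw [← hlength, (hT.existsUnique_path u v).unique hp hq]

theorem dist_eq_add_of_overlap (hT : T.IsTree) {x y z w : V} (hyz : y ≠ z)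
    (hxz : T.dist x z = T.dist x y + T.dist y z) (hyw : T.dist y w = T.dist y z + T.dist z w) :
    T.dist x w = T.dist x z + T.dist z w := by
  obtain ⟨p, hp⟩ := hT.connected.exists_walk_length_eq_dist x y
  obtain ⟨q, hq⟩ := hT.connected.exists_walk_length_eq_dist y z
  obtain ⟨r, hr⟩ := hT.connected.exists_walk_length_eq_dist z w
  have hpq : (p.append q).IsPath :=
    Walk.isPath_of_length_eq_dist _ (by rw [Walk.length_append, hp, hq, hxz])
  have hqr : (q.append r).IsPath :=
    Walk.isPath_of_length_eq_dist _ (by rw [Walk.length_append, hq, hr, hyw])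
  have hq_edges : q.edges ≠ [] := fun h ↦
    hyz (Walk.eq_of_length_eq_zero (by rw [← Walk.length_edges, h, List.length_nil]))
  -- In a forest a walk is a path as soon as consecutive edges differ, which is a local condition.
  have hpqr : ((p.append q).append r).IsPath := by
    rw [hT.isAcyclic.isPath_iff_isChain] at hpq hqr ⊢
    rw [Walk.edges_append] at hpq hqr
    rw [Walk.edges_append, Walk.edges_append]
    exact hpq.append_overlap hqr hq_edges
  rw [dist_eq_length_of_isPath hT hpqr, Walk.length_append, Walk.length_append, hp, hq, hr, hxz]

theorem dist_eq_sum_of_locally_geodesic (hT : T.IsTree) {x : ℕ → V} (hne : ∀ i, x i ≠ x (i + 1))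
    (hlocal : ∀ i, T.dist (x i) (x (i + 2)) =
      T.dist (x i) (x (i + 1)) + T.dist (x (i + 1)) (x (i + 2))) (n : ℕ) :
    T.dist (x 0) (x n) = ∑ i ∈ Finset.range n, T.dist (x i) (x (i + 1)) := by
  have hadd (n : ℕ) : T.dist (x 0) (x (n + 1)) = T.dist (x 0) (x n) + T.dist (x n) (x (n + 1)) := by
    induction n with
    | zero => rw [SimpleGraph.dist_self, zero_add, zero_add]
    | succ n ih => exact dist_eq_add_of_overlap hT (hne n) ih (hlocal n)
  induction n with
  | zero => rw [SimpleGraph.dist_self, Finset.sum_range_zero]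
  | succ n ih => rw [hadd, Finset.sum_range_succ, ih]

theorem dist_eq_two_of_adj_of_adj (hT : T.IsTree) {p c c' : V} (hc : T.Adj p c)
    (hc' : T.Adj p c') (hne : c ≠ c') : T.dist c c' = 2 := by
  have hpc : T.dist p c = 1 := dist_eq_one_iff_adj.2 hc
  have hpc' : T.dist p c' = 1 := dist_eq_one_iff_adj.2 hc'
  have hnadj : ¬T.Adj c c' := fun h ↦ hT.dist_ne_of_adj p h (hpc.trans hpc'.symm)
  have hgt := hT.connected.one_lt_dist_of_ne_of_not_adj hne hnadj
  have hle := hT.connected.dist_triangle (u := c) (v := p) (w := c')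
  rw [SimpleGraph.dist_comm (u := c) (v := p)] at hle
  omega

theorem dist_eq_add_of_branch (hT : T.IsTree) {p q q' c c' : V} (hc : T.Adj p c)
    (hc' : T.Adj p c') (hne : c ≠ c') (hq : T.dist p q = T.dist c q + 1)
    (hq' : T.dist p q' = T.dist c' q' + 1) :
    T.dist q q' = T.dist q p + T.dist p q' := by
  have hcp : T.dist c p = 1 := dist_eq_one_iff_adj.2 hc.symm
  have hpc' : T.dist p c' = 1 := dist_eq_one_iff_adj.2 hc'
  have hcc' : T.dist c c' = 2 := dist_eq_two_of_adj_of_adj hT hc hc' hne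
  have hqp : T.dist q p = T.dist q c + T.dist c p := by
    rw [SimpleGraph.dist_comm, hq, SimpleGraph.dist_comm, hcp]
  have hqc' : T.dist q c' = T.dist q p + T.dist p c' :=
    dist_eq_add_of_overlap hT hc.ne.symm hqp (by omega)
  have hqq' : T.dist q q' = T.dist q c' + T.dist c' q' :=
    dist_eq_add_of_overlap hT hc'.ne hqc' (by omega)
  omega

theorem exists_adj_dist_eq_dist_add_one (hconn : T.Connected) {p q : V} (hpq : p ≠ q) :
    ∃ c, T.Adj p c ∧ T.dist p q = T.dist c q + 1 := by
  obtain ⟨w, hw⟩ := hconn.exists_walk_length_eq_dist p q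
  cases w with
  | nil => exact absurd rfl hpq
  | @cons _ c _ hc r =>
    refine ⟨c, hc, ?_⟩
    have hlength : r.length + 1 = T.dist p q := hw
    have hle : T.dist p q ≤ T.dist p c + T.dist c q := hconn.dist_triangle
    rw [dist_eq_one_iff_adj.2 hc] at hle
    have := dist_le r
    omega

theorem setDist_le_dist (T : SimpleGraph V) {A B : Set V} {v w : V} (hv : v ∈ A) (hw : w ∈ B) :
    setDist T A B ≤ T.dist v w :=
  Nat.sInf_le ⟨v, hv, w, hw, rfl⟩

theorem exists_dist_eq_setDist (T : SimpleGraph V) {A B : Set V} (hA : A.Nonempty)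
    (hB : B.Nonempty) : ∃ v ∈ A, ∃ w ∈ B, T.dist v w = setDist T A B := by
  obtain ⟨v, hv⟩ := hA
  obtain ⟨w, hw⟩ := hB
  exact Nat.sInf_mem (s := {n | ∃ v ∈ A, ∃ w ∈ B, T.dist v w = n}) ⟨_, v, hv, w, hw, rfl⟩

end Metric

section Action

variable {G V : Type*} [Group G] [MulAction G V] {T : SimpleGraph V}

theorem transLen_le_dist_smul (T : SimpleGraph V) (g : G) (v : V) :
    transLen T g ≤ T.dist v (g • v) :=
  ciInf_le (OrderBot.bddBelow _) v

theorem isHyperbolic_of_transLen_ne_zero {g : G} (hg : transLen T g ≠ 0) : IsHyperbolic V g := by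
  rintro ⟨v, hv⟩
  have := transLen_le_dist_smul T g v
  rw [hv, SimpleGraph.dist_self] at this
  omega

namespace ActsByAut

theorem edist_smul_smul_le (hAct : ActsByAut G T) (g : G) (v w : V) :
    T.edist (g • v) (g • w) ≤ T.edist v w := by
  let f : T →g T := ⟨(g • ·), fun {v w} ↦ hAct g v w⟩
  refine le_iInf fun p ↦ ?_
  rw [← Walk.length_map f p]
  exact edist_le (p.map f)

theorem dist_smul_smul (hAct : ActsByAut G T) (g : G) (v w : V) :
    T.dist (g • v) (g • w) = T.dist v w := by
  refine congrArg ENat.toNat (le_antisymm (hAct.edist_smul_smul_le g v w) ?_)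
  simpa only [inv_smul_smul] using hAct.edist_smul_smul_le g⁻¹ (g • v) (g • w)

theorem dist_smul_eq_two_mul_of_nearest_fixed (hAct : ActsByAut G T) (hT : T.IsTree) {g : G}
    {p q : V} (hp : p ∈ Fixed V g) (hmin : ∀ v ∈ Fixed V g, T.dist p q ≤ T.dist v q) :
    T.dist q (g • q) = 2 * T.dist p q := by
  change g • p = p at hp
  rcases eq_or_ne p q with rfl | hpq
  · rw [hp, SimpleGraph.dist_self, mul_zero]
  obtain ⟨c, hc, hcq⟩ := exists_adj_dist_eq_dist_add_one hT.connected hpq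
  have hmoved : c ≠ g • c := by
    intro h
    have := hmin c h.symm
    omega
  have hgc : T.Adj p (g • c) := by simpa only [hp] using hAct g p c hc
  have hgq : T.dist p (g • q) = T.dist p q := by simpa only [hp] using hAct.dist_smul_smul g p q
  rw [dist_eq_add_of_branch hT hc hgc hmoved hcq (by rw [hgq, hAct.dist_smul_smul, hcq]), hgq,
    SimpleGraph.dist_comm, two_mul]

theorem dist_pow_smul_le (hAct : ActsByAut G T) (hconn : T.Connected) (g : G) (v : V) (n : ℕ) :
    T.dist v (g ^ n • v) ≤ n * T.dist v (g • v) := by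
  induction n with
  | zero => simp only [pow_zero, one_smul, SimpleGraph.dist_self, zero_mul, le_refl]
  | succ n ih =>
    calc T.dist v (g ^ (n + 1) • v)
        ≤ T.dist v (g ^ n • v) + T.dist (g ^ n • v) (g ^ (n + 1) • v) := hconn.dist_triangle
      _ = T.dist v (g ^ n • v) + T.dist v (g • v) := by
        rw [pow_succ, mul_smul, hAct.dist_smul_smul]
      _ ≤ n * T.dist v (g • v) + T.dist v (g • v) := by gcongr
      _ = (n + 1) * T.dist v (g • v) := by ring

theorem transLen_eq_of_dist_pow_smul (hAct : ActsByAut G T) (hconn : T.Connected) {g : G} {x : V}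
    (hpow : ∀ n : ℕ, T.dist x (g ^ n • x) = n * T.dist x (g • x)) :
    transLen T g = T.dist x (g • x) := by
  have : Nonempty V := ⟨x⟩
  refine le_antisymm (transLen_le_dist_smul T g x) (le_ciInf fun v ↦ ?_)
  have hlinear (n : ℕ) :
      n * T.dist x (g • x) ≤ n * T.dist v (g • v) + 2 * T.dist x v :=
    calc n * T.dist x (g • x)
        = T.dist x (g ^ n • x) := (hpow n).symm
      _ ≤ T.dist x v + T.dist v (g ^ n • x) := hconn.dist_triangle
      _ ≤ T.dist x v + (T.dist v (g ^ n • v) + T.dist (g ^ n • v) (g ^ n • x)) := by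
        gcongr; exact hconn.dist_triangle
      _ = T.dist v (g ^ n • v) + 2 * T.dist x v := by
        rw [hAct.dist_smul_smul, SimpleGraph.dist_comm (u := v) (v := x)]; ring
      _ ≤ n * T.dist v (g • v) + 2 * T.dist x v := by
        gcongr; exact hAct.dist_pow_smul_le hconn g v n
  by_contra! hlt
  have := hlinear (2 * T.dist x v + 1)
  nlinarith

theorem dist_pow_smul_of_dist_sq_smul (hAct : ActsByAut G T) (hT : T.IsTree) {g : G} {x : V}
    (hsq : T.dist x (g ^ 2 • x) = 2 * T.dist x (g • x)) (n : ℕ) :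
    T.dist x (g ^ n • x) = n * T.dist x (g • x) := by
  rcases eq_or_ne (g • x) x with hfix | hmoved
  · have := hAct.dist_pow_smul_le hT.connected g x n
    rw [hfix, SimpleGraph.dist_self, mul_zero] at this ⊢
    omega
  have hstep (i : ℕ) : T.dist (g ^ i • x) (g ^ (i + 1) • x) = T.dist x (g • x) := by
    rw [pow_succ, mul_smul, hAct.dist_smul_smul]
  have hstep_two (i : ℕ) : T.dist (g ^ i • x) (g ^ (i + 2) • x) = 2 * T.dist x (g • x) := by
    rw [pow_add, mul_smul, hAct.dist_smul_smul, hsq]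
  have hne (i : ℕ) : g ^ i • x ≠ g ^ (i + 1) • x := by
    rw [pow_succ, mul_smul]
    exact fun h ↦ hmoved (smul_left_cancel _ h).symm
  have hsum := dist_eq_sum_of_locally_geodesic hT hne
    (fun i ↦ by rw [hstep_two, hstep, hstep, two_mul]) n
  simpa only [pow_zero, one_smul, hstep, Finset.sum_const, Finset.card_range, smul_eq_mul]
    using hsum

theorem dist_mul_sq_smul_of_fixed (hAct : ActsByAut G T) (hT : T.IsTree) {g₁ g₂ : G} {p q : V}
    (hp : p ∈ Fixed V g₁) (hq : q ∈ Fixed V g₂)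
    (hturn₁ : T.dist q (g₁ • q) = 2 * T.dist p q) (hturn₂ : T.dist p (g₂ • p) = 2 * T.dist p q) :
    T.dist q ((g₁ * g₂) ^ 2 • q) = 2 * T.dist q ((g₁ * g₂) • q) := by
  change g₁ • p = p at hp
  change g₂ • q = q at hq
  rcases eq_or_ne p q with rfl | hpq
  · simp only [pow_two, mul_smul, hp, hq, SimpleGraph.dist_self, mul_zero]
  generalize h_def : g₁ * g₂ = h
  have hhq : h • q = g₁ • q := by rw [← h_def, mul_smul, hq]
  have hqp : T.dist q p = T.dist p q := SimpleGraph.dist_comm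
  have hp_hq : T.dist p (h • q) = T.dist p q := by
    simpa only [hhq, hp] using hAct.dist_smul_smul g₁ p q
  have hp_hp : T.dist p (h • p) = 2 * T.dist p q := by
    simpa only [← h_def, mul_smul, hp, hturn₂] using hAct.dist_smul_smul g₁ p (g₂ • p)
  have hhq_hp : T.dist (h • q) (h • p) = T.dist p q := by rw [hAct.dist_smul_smul, hqp]
  have hhp_hhq : T.dist (h • p) (h ^ 2 • q) = T.dist p q := by
    rw [pow_two, mul_smul, hAct.dist_smul_smul, hp_hq]
  have hhq_hhq : T.dist (h • q) (h ^ 2 • q) = 2 * T.dist p q := by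
    rw [pow_two, mul_smul, hAct.dist_smul_smul, hhq, hturn₁]
  have hp_ne : p ≠ h • q := by
    rw [hhq]
    exact fun e ↦ hpq (smul_left_cancel g₁ (hp.trans e))
  have hhq_ne : h • q ≠ h • p := fun e ↦ hpq (smul_left_cancel h e).symm
  rw [← hhq] at hturn₁
  have hq_hp : T.dist q (h • p) = T.dist q (h • q) + T.dist (h • q) (h • p) :=
    dist_eq_add_of_overlap hT hp_ne (by omega) (by omega)
  have hq_hhq : T.dist q (h ^ 2 • q) = T.dist q (h • p) + T.dist (h • p) (h ^ 2 • q) :=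
    dist_eq_add_of_overlap hT hhq_ne hq_hp (by omega)
  omega

end ActsByAut

end Action

theorem statement5_general {G V : Type*} [Group G] [MulAction G V] (T : SimpleGraph V)
    (hT : T.IsTree) (hAct : ActsByAut G T)
    (g1 g2 : G) (hg1 : IsElliptic V g1) (hg2 : IsElliptic V g2)
    (hdisj : Fixed V g1 ∩ Fixed V g2 = (∅ : Set V)) :
    IsHyperbolic V (g1 * g2) ∧
      transLen T (g1 * g2) = 2 * setDist T (Fixed V g1) (Fixed V g2) := by
  obtain ⟨p, hp, q, hq, hD⟩ := exists_dist_eq_setDist T (A := Fixed V g1) (B := Fixed V g2) hg1 hg2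
  have hpq : p ≠ q := by
    rintro rfl
    exact Set.eq_empty_iff_forall_notMem.1 hdisj p ⟨hp, hq⟩
  have hpos : 0 < T.dist p q := hT.connected.pos_dist_of_ne hpq
  have hturn₁ : T.dist q (g1 • q) = 2 * T.dist p q :=
    hAct.dist_smul_eq_two_mul_of_nearest_fixed hT hp fun v hv ↦ hD ▸ setDist_le_dist T hv hq
  have hturn₂ : T.dist p (g2 • p) = 2 * T.dist p q := by
    rw [SimpleGraph.dist_comm (u := p) (v := q)]
    refine hAct.dist_smul_eq_two_mul_of_nearest_fixed hT hq fun w hw ↦ ?_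
    rw [SimpleGraph.dist_comm (u := q), SimpleGraph.dist_comm (u := w), hD]
    exact setDist_le_dist T hp hw
  have hhq : (g1 * g2) • q = g1 • q := by rw [mul_smul, show g2 • q = q from hq]
  have hτ : transLen T (g1 * g2) = 2 * T.dist p q := by
    rw [← hturn₁, ← hhq]
    exact hAct.transLen_eq_of_dist_pow_smul hT.connected <|
      hAct.dist_pow_smul_of_dist_sq_smul hT <|
        hAct.dist_mul_sq_smul_of_fixed hT hp hq hturn₁ hturn₂
  exact ⟨isHyperbolic_of_transLen_ne_zero (T := T) (by omega), by rw [hτ, hD]⟩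

/-- If `G` acts without edge inversions on a simplicial tree and `g1, g2`
are elliptic with `Fix(g1) ∩ Fix(g2) = ∅`, then `g1 * g2` is hyperbolic with translation
length `2 · d(Fix(g1), Fix(g2))`. -/
theorem statement5 {G V : Type*} [Group G] [MulAction G V] (T : SimpleGraph V)
    (hT : T.IsTree) (hAct : ActsByAut G T) (hNoInv : NoEdgeInversion G T)
    (g1 g2 : G) (hg1 : IsElliptic V g1) (hg2 : IsElliptic V g2)
    (hdisj : Fixed V g1 ∩ Fixed V g2 = (∅ : Set V)) :
    IsHyperbolic V (g1 * g2) ∧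
      transLen T (g1 * g2) = 2 * setDist T (Fixed V g1) (Fixed V g2) :=
  statement5_general T hT hAct g1 g2 hg1 hg2 hdisj
end

section
/- Let G be a group acting without edge inversions on a simplicial tree T, and let g1, g2 ∈ G be elliptic elements. For i = 1, 2 let T(g_i) denote the set of vertices fixed by some nontrivial power of g_i, i.e. the union of Fix(g_i^n) over all integers n with g_i^n ≠ 1. If T(g1) ∩ T(g2) = ∅, then g1 and g2 generate a rank 2 free product in G. -/
open SimpleGraph Pointwise

/-- The set of vertices fixed by some nontrivial power of `g`. -/
def FixPowers {G : Type*} [Group G] (V : Type*) [MulAction G V] (g : G) : Set V :=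
  {v | ∃ n : ℤ, g ^ n ≠ 1 ∧ (g ^ n) • v = v}

/-!
Let `p` and `q` be vertices fixed by `g1` and `g2`. The geodesic from `p` to `q` leaves `T(g1)`
along some edge `xy`, and deleting this edge splits the tree into two half-trees, one on the side
of `p` and `x`, the other on the side of `q` and `y`. A nontrivial power `h` of `g1` fixes `p` but
not `y`, so it cannot map a vertex `v` of the far half-tree into that half-tree: `y` and `h • y`
would both lie on the geodesic from `p` to `h • v`, at the same distance from `p`. By symmetry, the
two half-trees are ping-pong sets for `⟨g1⟩` and `⟨g2⟩`.

For two factors, the usual ping-pong lemma needs one with at least three elements. Here each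
ping-pong set `X i` contains a point `b i` fixed by its factor, and this suffices: a nonempty
reduced word `w` that begins in factor `i` and ends in a factor other than `k` maps `X k` into
`X i \ {b i}`, so `w • b k ≠ b k`.
-/

section PingPong

open Monoid Function

variable {ι G α : Type*} [Group G] [MulAction G α] {M : ι → Type*} [∀ i, Group (M i)]
  {f : ∀ i, M i →* G} {X : ι → Set α} {b : ι → α}

theorem lift_neWord_smul_subset_sdiff_singleton (hb : ∀ i (m : M i), f i m • b i = b i)
    (hbX : ∀ i, b i ∈ X i) (hX : Pairwise (Disjoint on X))
    (hpp : Pairwise fun i j => ∀ m : M i, m ≠ 1 → f i m • X j ⊆ X i)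
    {i j k : ι} (w : CoprodI.NeWord M i j) (hjk : j ≠ k) :
    CoprodI.lift f w.prod • X k ⊆ X i \ {b i} := by
  induction w generalizing k with
  | @singleton i m hm =>
    rw [CoprodI.NeWord.prod_singleton, CoprodI.lift_of]
    refine Set.subset_sdiff_singleton (hpp hjk m hm) fun hmem => ?_
    have hbk : b i ∈ X k := by rwa [← hb i m, Set.smul_mem_smul_set_iff] at hmem
    exact (hX hjk).notMem_of_mem_left (hbX i) hbk
  | append w₁ hne w₂ ih₁ _ =>
    rw [CoprodI.NeWord.append_prod, map_mul, mul_smul]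
    exact (Set.smul_set_mono (CoprodI.lift_word_ping_pong f X hpp w₂ hjk)).trans (ih₁ hne)

theorem lift_neWord_prod_ne_one [Nontrivial ι] (hb : ∀ i (m : M i), f i m • b i = b i)
    (hbX : ∀ i, b i ∈ X i) (hX : Pairwise (Disjoint on X))
    (hpp : Pairwise fun i j => ∀ m : M i, m ≠ 1 → f i m • X j ⊆ X i)
    {i j : ι} (w : CoprodI.NeWord M i j) : CoprodI.lift f w.prod ≠ 1 := by
  intro hw
  obtain ⟨k, hkj⟩ := exists_ne j
  have hsub := lift_neWord_smul_subset_sdiff_singleton hb hbX hX hpp w hkj.symm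
  rw [hw, one_smul] at hsub
  obtain ⟨hbk, hbk_ne⟩ := hsub (hbX k)
  have hki : k ≠ i := fun hki => hbk_ne (congrArg b hki)
  exact (hX hki).notMem_of_mem_left (hbX k) hbk

theorem coprodI_lift_injective_of_ping_pong_of_fixed [Nontrivial ι]
    (hb : ∀ i (m : M i), f i m • b i = b i) (hbX : ∀ i, b i ∈ X i)
    (hX : Pairwise (Disjoint on X))
    (hpp : Pairwise fun i j => ∀ m : M i, m ≠ 1 → f i m • X j ⊆ X i) :
    Injective (CoprodI.lift f) := by
  classical
  rw [injective_iff_map_eq_one, CoprodI.Word.equiv.forall_congr_left]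
  intro w hw
  rcases eq_or_ne w CoprodI.Word.empty with rfl | hne
  · exact CoprodI.Word.prod_empty
  · obtain ⟨i, j, w, rfl⟩ := CoprodI.NeWord.of_word w hne
    exact absurd hw (lift_neWord_prod_ne_one hb hbX hX hpp w)

end PingPong

section Coprod

open Monoid Function

theorem coprod_lift_injective_of_coprodI {M : Bool → Type*} [∀ i, Monoid (M i)] {P : Type*}
    [Monoid P] {f : ∀ i, M i →* P} (hf : Injective (CoprodI.lift f)) :
    Injective (Coprod.lift (f true) (f false)) := by
  let toI : Coprod (M true) (M false) →* CoprodI M := Coprod.lift CoprodI.of CoprodI.of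
  let ofI : CoprodI M →* Coprod (M true) (M false) :=
    CoprodI.lift fun | true => Coprod.inl | false => Coprod.inr
  have ofI_toI : ofI.comp toI = MonoidHom.id _ := by
    ext <;> simp [toI, ofI]
  have lift_toI : (CoprodI.lift f).comp toI = Coprod.lift (f true) (f false) := by
    ext <;> simp [toI]
  rw [← lift_toI]
  exact hf.comp (LeftInverse.injective (DFunLike.congr_fun ofI_toI))

theorem coprod_lift_injective_of_subsingleton_left {M N P : Type*} [Monoid M] [Monoid N]
    [Monoid P] [Subsingleton M] (f : M →* P) {g : N →* P} (hg : Injective g) :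
    Injective (Coprod.lift f g) := by
  have inr_snd : (Coprod.inr.comp Coprod.snd : Coprod M N →* Coprod M N) = MonoidHom.id _ :=
    Coprod.hom_ext (by ext m; simp [Subsingleton.elim m 1]) rfl
  have lift_eq : Coprod.lift f g = g.comp Coprod.snd :=
    Coprod.hom_ext (by ext m; simp [Subsingleton.elim m 1]) rfl
  rw [lift_eq]
  exact hg.comp (LeftInverse.injective (g := Coprod.inr) (DFunLike.congr_fun inr_snd))

theorem coprod_lift_injective_of_subsingleton_right {M N P : Type*} [Monoid M] [Monoid N]
    [Monoid P] [Subsingleton N] {f : M →* P} (g : N →* P) (hf : Injective f) :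
    Injective (Coprod.lift f g) := by
  rw [← Coprod.lift_comp_swap]
  exact (coprod_lift_injective_of_subsingleton_left g hf).comp Coprod.swap_injective

theorem coprod_lift_subtype_injective_of_ping_pong {G α : Type*} [Group G] [MulAction G α]
    {H K : Subgroup G} {A B : Set α} {p q : α} (hp : H ≤ MulAction.stabilizer G p)
    (hq : K ≤ MulAction.stabilizer G q) (hpA : p ∈ A) (hqB : q ∈ B) (hAB : Disjoint A B)
    (hH : ∀ h ∈ H, h ≠ 1 → h • B ⊆ A) (hK : ∀ k ∈ K, k ≠ 1 → k • A ⊆ B) :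
    Injective (Coprod.lift H.subtype K.subtype) := by
  refine coprod_lift_injective_of_coprodI (f := fun i => (cond i H K).subtype)
    (coprodI_lift_injective_of_ping_pong_of_fixed (X := fun i => cond i A B)
      (b := fun i => cond i p q) ?_ ?_ ?_ ?_)
  · rintro (_ | _) m
    exacts [hq m.2, hp m.2]
  · rintro (_ | _)
    exacts [hqB, hpA]
  · rintro (_ | _) (_ | _) hij
    exacts [absurd rfl hij, hAB.symm, hAB, absurd rfl hij]
  · rintro (_ | _) (_ | _) hij m hm
    exacts [absurd rfl hij, hK m m.2 (by simpa using hm), hH m m.2 (by simpa using hm),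
      absurd rfl hij]

end Coprod

section HalfTree

variable {V : Type*} {T : SimpleGraph V} {p q u v x y z : V}

/-- The half-tree of an edge `xy` of a tree on the side of `x`, encoded as the set of vertices
closer to `x` than to `y`. -/
def halfTree (T : SimpleGraph V) (x y : V) : Set V := {v | T.dist v x < T.dist v y}

theorem mem_halfTree : v ∈ halfTree T x y ↔ T.dist v x < T.dist v y := Iff.rfl

theorem disjoint_halfTree (T : SimpleGraph V) (x y : V) :
    Disjoint (halfTree T x y) (halfTree T y x) :=
  Set.disjoint_left.2 fun _ hx hy => lt_asymm (mem_halfTree.1 hx) hy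

theorem notMem_halfTree_iff (hT : T.IsTree) (hxy : T.Adj x y) :
    v ∉ halfTree T x y ↔ v ∈ halfTree T y x := by
  have hne := hT.dist_ne_of_adj v hxy
  rw [mem_halfTree, mem_halfTree]
  omega

theorem dist_add_one_add_dist_of_mem_darts {w : T.Walk u v} (hw : w.length = T.dist u v)
    {d : T.Dart} (hd : d ∈ w.darts) :
    T.dist u d.fst + 1 + T.dist d.snd v = T.dist u v := by
  obtain ⟨a, b, rfl⟩ := (w.isSubwalk_toWalk_adj_iff_mem_darts).2 hd
  have ha : a.length = T.dist u d.fst :=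
    length_eq_dist_of_subwalk hw ⟨Walk.nil, d.adj.toWalk.append b, by simp [← Walk.append_assoc]⟩
  have hb : b.length = T.dist d.snd v :=
    length_eq_dist_of_subwalk hw ⟨a.append d.adj.toWalk, Walk.nil, by simp⟩
  rw [← hw, ← ha, ← hb]
  simp

theorem exists_adj_mem_halfTree_of_mem_of_notMem (hT : T.Connected) {S : Set V} (hp : p ∈ S)
    (hq : q ∉ S) :
    ∃ x ∈ S, ∃ y ∉ S, T.Adj x y ∧ p ∈ halfTree T x y ∧ q ∈ halfTree T y x := by
  obtain ⟨w, hw⟩ := hT.exists_walk_length_eq_dist p q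
  obtain ⟨d, hd, hdS, hdS'⟩ := w.exists_boundary_dart S hp hq
  have hdist := dist_add_one_add_dist_of_mem_darts hw hd
  refine ⟨d.fst, hdS, d.snd, hdS', d.adj, ?_, ?_⟩
  · have htri := hT.dist_triangle (u := p) (v := d.snd) (w := q)
    rw [mem_halfTree]
    omega
  · have htri := hT.dist_triangle (u := p) (v := d.fst) (w := q)
    rw [mem_halfTree, T.dist_comm (u := q), T.dist_comm (u := q)]
    omega

theorem getVert_dist_of_isPath (hT : T.IsTree) {w : T.Walk u v} (hw : w.IsPath)
    (hz : T.dist u z + T.dist z v = T.dist u v) : w.getVert (T.dist u z) = z := by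
  obtain ⟨a, ha⟩ := hT.connected.exists_walk_length_eq_dist u z
  obtain ⟨b, hb⟩ := hT.connected.exists_walk_length_eq_dist z v
  have hab : (a.append b).IsPath :=
    Walk.isPath_of_length_eq_dist _ (by rw [Walk.length_append, ha, hb, hz])
  rw [(hT.existsUnique_path u v).unique hw hab, ← ha]
  simp [Walk.getVert_append]

theorem eq_of_dist_add_dist_eq (hT : T.IsTree) (hy : T.dist u y + T.dist y v = T.dist u v)
    (hz : T.dist u z + T.dist z v = T.dist u v) (hyz : T.dist u y = T.dist u z) : y = z := by
  obtain ⟨w, hw, -⟩ := hT.existsUnique_path u v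
  rw [← getVert_dist_of_isPath hT hw hy, hyz, getVert_dist_of_isPath hT hw hz]

theorem eq_and_eq_of_adj_of_mem_halfTree (hT : T.IsTree) (hxy : T.Adj x y) (huv : T.Adj u v)
    (hu : u ∈ halfTree T x y) (hv : v ∈ halfTree T y x) : u = x ∧ v = y := by
  rw [mem_halfTree] at hu hv
  have hyx : T.dist y x = 1 := dist_eq_one_iff_adj.2 hxy.symm
  have hvx : T.dist v x = T.dist u x + 1 := by
    have hx := hT.dist_eq_dist_add_one_of_adj x huv
    have hy := hT.dist_eq_dist_add_one_of_adj y huv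
    rw [T.dist_comm (u := x), T.dist_comm (u := x)] at hx
    rw [T.dist_comm (u := y), T.dist_comm (u := y)] at hy
    omega
  have hvyx : T.dist v y + T.dist y x = T.dist v x := by
    have hv' := hT.dist_eq_dist_add_one_of_adj v hxy
    omega
  obtain ⟨a, ha⟩ := hT.connected.exists_walk_length_eq_dist u x
  have hpath : (Walk.cons huv.symm a).IsPath :=
    Walk.isPath_of_length_eq_dist _ (by rw [Walk.length_cons, ha, hvx])
  have hy : y ∈ (Walk.cons huv.symm a).support :=
    getVert_dist_of_isPath hT hpath hvyx ▸ Walk.getVert_mem_support _ _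
  rw [Walk.support_cons, List.mem_cons] at hy
  rcases hy with rfl | hya
  · exact ⟨hT.connected.dist_eq_zero_iff.1 (by omega), rfl⟩
  · classical
    have huy := (T.dist_le (a.takeUntil y hya)).trans (a.length_takeUntil_le_length hya)
    omega

theorem dist_add_dist_of_mem_halfTree (hT : T.IsTree) (hxy : T.Adj x y)
    (hp : p ∈ halfTree T x y) (hq : q ∈ halfTree T y x) :
    T.dist p y + T.dist y q = T.dist p q := by
  obtain ⟨w, hw⟩ := hT.connected.exists_walk_length_eq_dist p q
  obtain ⟨d, hd, hfst, hsnd⟩ := w.exists_boundary_dart (halfTree T x y) hp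
    ((disjoint_halfTree T x y).notMem_of_mem_right hq)
  obtain ⟨hx, hy⟩ := eq_and_eq_of_adj_of_mem_halfTree hT hxy d.adj hfst
    ((notMem_halfTree_iff hT hxy).1 hsnd)
  have hdist := dist_add_one_add_dist_of_mem_darts hw hd
  rw [hx, hy] at hdist
  have hpxy := hT.dist_eq_dist_add_one_of_adj p hxy
  rw [mem_halfTree] at hp
  omega

end HalfTree

section Action

variable {G V : Type*} [Group G] [MulAction G V] {T : SimpleGraph V}

theorem dist_smul_smul_le (hT : T.Connected) (hAct : ActsByAut G T) (g : G) (u v : V) :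
    T.dist (g • u) (g • v) ≤ T.dist u v := by
  obtain ⟨w, hw⟩ := hT.exists_walk_length_eq_dist u v
  let smulHom : T →g T := ⟨(g • ·), hAct g _ _⟩
  rw [← hw, ← w.length_map smulHom]
  exact T.dist_le _

theorem dist_smul_smul (hT : T.Connected) (hAct : ActsByAut G T) (g : G) (u v : V) :
    T.dist (g • u) (g • v) = T.dist u v :=
  (dist_smul_smul_le hT hAct g u v).antisymm
    (by simpa using dist_smul_smul_le hT hAct g⁻¹ (g • u) (g • v))

theorem smul_halfTree_subset (hT : T.IsTree) (hAct : ActsByAut G T) {g : G} {p x y : V}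
    (hxy : T.Adj x y) (hp : p ∈ halfTree T x y) (hgp : g • p = p) (hgy : g • y ≠ y) :
    g • halfTree T y x ⊆ halfTree T x y := by
  rintro _ ⟨v, hv, rfl⟩
  by_contra hgv
  have hgv' : g • v ∈ halfTree T y x := (notMem_halfTree_iff hT hxy).1 hgv
  have hdist (u : V) : T.dist p (g • u) = T.dist p u := by
    simpa only [hgp] using dist_smul_smul hT.connected hAct g p u
  have hgy_between : T.dist p (g • y) + T.dist (g • y) (g • v) = T.dist p (g • v) := by
    rw [hdist, hdist, dist_smul_smul hT.connected hAct]
    exact dist_add_dist_of_mem_halfTree hT hxy hp hv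
  exact hgy (eq_of_dist_add_dist_eq hT hgy_between
    (dist_add_dist_of_mem_halfTree hT hxy hp hgv') (hdist y))

theorem mem_fixPowers_iff_not_disjoint {g : G} {v : V} :
    v ∈ FixPowers V g ↔ ¬Disjoint (Subgroup.zpowers g) (MulAction.stabilizer G v) := by
  simp [FixPowers, Subgroup.disjoint_def, Subgroup.forall_mem_zpowers, and_comm]

theorem fixPowers_inter_fixPowers_eq_empty_iff {g h : G} :
    FixPowers V g ∩ FixPowers V h = ∅ ↔
      ∀ v : V, Disjoint (Subgroup.zpowers g) (MulAction.stabilizer G v) ∨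
        Disjoint (Subgroup.zpowers h) (MulAction.stabilizer G v) := by
  simp only [Set.eq_empty_iff_forall_notMem, Set.mem_inter_iff, mem_fixPowers_iff_not_disjoint,
    not_and_or, not_not]

/-- Arbitrary subgroups `H` and `K` replace the cyclic ones, with `T(H)` the set of vertices `v`
such that `Disjoint H (MulAction.stabilizer G v)` fails. -/
theorem statement6_general (hT : T.IsTree) (hAct : ActsByAut G T) {H K : Subgroup G} {p q : V}
    (hp : H ≤ MulAction.stabilizer G p) (hq : K ≤ MulAction.stabilizer G q)
    (hdisj : ∀ v : V, Disjoint H (MulAction.stabilizer G v) ∨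
      Disjoint K (MulAction.stabilizer G v)) :
    Function.Injective (Monoid.Coprod.lift H.subtype K.subtype) := by
  rcases eq_or_ne H ⊥ with rfl | hH
  · exact coprod_lift_injective_of_subsingleton_left _ K.subtype_injective
  rcases eq_or_ne K ⊥ with rfl | hK
  · exact coprod_lift_injective_of_subsingleton_right _ H.subtype_injective
  have hpH : ¬Disjoint H (MulAction.stabilizer G p) := mt (disjoint_of_le_iff_left_eq_bot hp).1 hH
  have hqH : Disjoint H (MulAction.stabilizer G q) :=
    (hdisj q).resolve_right (mt (disjoint_of_le_iff_left_eq_bot hq).1 hK)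
  obtain ⟨x, hxH, y, hyH, hxy, hpx, hqy⟩ := exists_adj_mem_halfTree_of_mem_of_notMem hT.connected
    (S := {v | ¬Disjoint H (MulAction.stabilizer G v)}) hpH (not_not.2 hqH)
  have hxK : Disjoint K (MulAction.stabilizer G x) := (hdisj x).resolve_left hxH
  exact coprod_lift_subtype_injective_of_ping_pong hp hq hpx hqy (disjoint_halfTree T x y)
    (fun h hh h_ne => smul_halfTree_subset hT hAct hxy hpx (hp hh)
      fun hfix => h_ne (Subgroup.disjoint_def.1 (not_not.1 hyH) hh hfix))
    (fun k hk k_ne => smul_halfTree_subset hT hAct hxy.symm hqy (hq hk)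
      fun hfix => k_ne (Subgroup.disjoint_def.1 hxK hk hfix))

end Action

/-- If `G` acts without edge inversions on a simplicial tree, `g1, g2`
are elliptic, and `T(g1) ∩ T(g2) = ∅` (where `T(g)` is the set of vertices fixed by some
nontrivial power of `g`), then `g1` and `g2` generate a rank 2 free product in `G`. -/
theorem statement6 {G V : Type*} [Group G] [MulAction G V] (T : SimpleGraph V)
    (hT : T.IsTree) (hAct : ActsByAut G T) (hNoInv : NoEdgeInversion G T)
    (g1 g2 : G) (hg1 : IsElliptic V g1) (hg2 : IsElliptic V g2)
    (hdisj : FixPowers V g1 ∩ FixPowers V g2 = (∅ : Set V)) :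
    IsRank2FreeProduct g1 g2 := by
  exact statement6_general hT hAct (Subgroup.zpowers_le.2 hg1.choose_spec)
    (Subgroup.zpowers_le.2 hg2.choose_spec) (fixPowers_inter_fixPowers_eq_empty_iff.1 hdisj)
end
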